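/- Let h, f : ℝⁿ → ℝⁿ be differentiable and let A : ℝ → Matrix (Fin n) (Fin n) ℝ be differentiable with A(t) invertible for every t. Define ĥ(t,x) := A(t)·h(A(t)⁻¹·x) and f*(t,x) := A'(t)·A(t)⁻¹·x + A(t)·f(A(t)⁻¹·x). Then for all t and x, the Lie bracket with respect to x (t being a parameter) satisfies [ĥ, f*]_x(t,x) := D_x f*(t,x)·ĥ(t,x) − D_x ĥ(t,x)·f*(t,x) = D_t ĥ(t,x) + A(t)·[h,f](A(t)⁻¹·x), where [h,f](x) := Df(x)·h(x) − Dh(x)·f(x). In particular, if [h,f] = 0 identically, then [ĥ, f*]_x(t,x) = D_t ĥ(t,x) for all t, x. -/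

import Mathlib

open Matrix

/-!
Write `L = A'(t) A(t)⁻¹`. The gauge transform `f* = L + f̂` is the sum of a linear field and the
pushforward of `f` along `A(t)`. Pushing forward along a fixed linear isomorphism preserves
brackets, so `[ĥ, f̂] = A(t) [h, f] ∘ A(t)⁻¹`. Since `A(t)⁻¹` has derivative `-A(t)⁻¹ L`,
differentiating `ĥ = A(t) ∘ h ∘ A(t)⁻¹` in `t` gives `D_t ĥ = L ĥ - D_x ĥ L = [ĥ, L]`.
-/

open VectorField

section BanachSpace

variable {𝕜 E F : Type*} [NontriviallyNormedField 𝕜]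
  [NormedAddCommGroup E] [NormedSpace 𝕜 E] [NormedAddCommGroup F] [NormedSpace 𝕜 F]

/-- The pushforward `ĥ = e ∘ h ∘ e⁻¹` of a vector field `h` along a linear isomorphism `e`,
equal to `VectorField.pullback 𝕜 e.symm h` but stated without the derivative of `e.symm`. -/
def linearPushforward (e : E ≃L[𝕜] F) (h : E → E) : F → F :=
  e ∘ h ∘ e.symm

/-- The gauge transform `f* = e' ∘ e⁻¹ + e ∘ f ∘ e⁻¹` of a vector field `f`. It is the vector field
satisfied by `A(t) y(t)` when `y' = f(y)`, with the value `e = A(t)` and the velocity `e' = A'(t)`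
of the gauge as independent arguments. -/
def gaugeTransform (e : E ≃L[𝕜] F) (e' : E →L[𝕜] F) (f : E → E) : F → F :=
  ⇑(e' ∘L (e.symm : F →L[𝕜] E)) + linearPushforward e f

theorem fderiv_linearPushforward (e : E ≃L[𝕜] F) (h : E → E) (y : F) :
    fderiv 𝕜 (linearPushforward e h) y = e ∘L fderiv 𝕜 h (e.symm y) ∘L e.symm := by
  rw [linearPushforward, e.comp_fderiv, e.symm.comp_right_fderiv]

theorem lieBracket_linearPushforward (e : E ≃L[𝕜] F) (h f : E → E) (y : F) :
    lieBracket 𝕜 (linearPushforward e h) (linearPushforward e f) y =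
      e (lieBracket 𝕜 h f (e.symm y)) := by
  simp only [lieBracket, fderiv_linearPushforward]
  simp [linearPushforward]

theorem lieBracket_linearPushforward_clm (e : E ≃L[𝕜] F) (h : E → E) (L : F →L[𝕜] F) (y : F) :
    lieBracket 𝕜 (linearPushforward e h) L y =
      L (linearPushforward e h y) - e (fderiv 𝕜 h (e.symm y) (e.symm (L y))) := by
  rw [lieBracket, L.fderiv, fderiv_linearPushforward]
  rfl

theorem differentiableAt_linearPushforward {e : E ≃L[𝕜] F} {h : E → E} {y : F}
    (hh : DifferentiableAt 𝕜 h (e.symm y)) : DifferentiableAt 𝕜 (linearPushforward e h) y :=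
  e.differentiableAt.comp y (hh.comp y e.symm.differentiableAt)

variable [CompleteSpace E] {A : 𝕜 → E ≃L[𝕜] F} {A' : E →L[𝕜] F} {t : 𝕜}

theorem hasDerivAt_continuousLinearEquiv_symm_apply
    (hA : HasDerivAt (fun s ↦ (A s : E →L[𝕜] F)) A' t) (y : F) :
    HasDerivAt (fun s ↦ (A s).symm y) (-(A t).symm (A' ((A t).symm y))) t := by
  have inv_differentiable : DifferentiableAt 𝕜 (fun s ↦ ((A s).symm : F →L[𝕜] E)) t := by
    simpa only [Function.comp_def, ContinuousLinearMap.inverse_equiv] using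
      ((contDiffAt_map_inverse (n := 1) (A t)).differentiableAt one_ne_zero).comp t
        hA.differentiableAt
  have symm_differentiable : DifferentiableAt 𝕜 (fun s ↦ (A s).symm y) t :=
    inv_differentiable.clm_apply (differentiableAt_const y)
  have product_rule : A' ((A t).symm y) + A t (deriv (fun s ↦ (A s).symm y) t) = 0 := by
    refine (hA.clm_apply symm_differentiable.hasDerivAt).unique ?_
    simpa using hasDerivAt_const t y
  convert symm_differentiable.hasDerivAt using 1
  rw [← map_neg, ContinuousLinearEquiv.symm_apply_eq]
  exact neg_eq_of_add_eq_zero_right product_rule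

theorem hasDerivAt_linearPushforward {h : E → E} {y : F}
    (hA : HasDerivAt (fun s ↦ (A s : E →L[𝕜] F)) A' t)
    (hh : DifferentiableAt 𝕜 h ((A t).symm y)) :
    HasDerivAt (fun s ↦ linearPushforward (A s) h y)
      (lieBracket 𝕜 (linearPushforward (A t) h) (A' ∘L ((A t).symm : F →L[𝕜] E)) y) t := by
  rw [lieBracket_linearPushforward_clm]
  simpa [linearPushforward, sub_eq_add_neg] using
    hA.clm_apply (hh.hasFDerivAt.comp_hasDerivAt t
      (hasDerivAt_continuousLinearEquiv_symm_apply hA y))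

theorem gauge_transform_lie_bracket_general {h f : E → E} {y : F}
    (hA : HasDerivAt (fun s ↦ (A s : E →L[𝕜] F)) A' t)
    (hh : DifferentiableAt 𝕜 h ((A t).symm y)) (hf : DifferentiableAt 𝕜 f ((A t).symm y)) :
    lieBracket 𝕜 (linearPushforward (A t) h) (gaugeTransform (A t) A' f) y =
      deriv (fun s ↦ linearPushforward (A s) h y) t +
        A t (lieBracket 𝕜 h f ((A t).symm y)) := by
  rw [gaugeTransform, lieBracket_add_right (ContinuousLinearMap.differentiableAt _)
      (differentiableAt_linearPushforward hf),
    (hasDerivAt_linearPushforward hA hh).deriv, lieBracket_linearPushforward]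

end BanachSpace

section Matrix

variable {𝕜 m n : Type*} [NontriviallyNormedField 𝕜] [CompleteSpace 𝕜] [Fintype n]

/-- Multiplication of vectors by an invertible matrix as a continuous linear automorphism. The
inverse is multiplication by `M⁻¹` by definition. -/
noncomputable def mulVecEquiv [DecidableEq n] (M : Matrix n n 𝕜) (hM : IsUnit M) :
    (n → 𝕜) ≃L[𝕜] (n → 𝕜) :=
  (toLin'OfInv (M.mul_nonsing_inv ((isUnit_iff_isUnit_det M).1 hM))
    (M.nonsing_inv_mul ((isUnit_iff_isUnit_det M).1 hM))).symm.toContinuousLinearEquiv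

open scoped Matrix.Norms.Elementwise in
theorem hasDerivAt_mulVecLin_toContinuousLinearMap [Finite m] {A : 𝕜 → Matrix m n 𝕜}
    {A' : Matrix m n 𝕜} {t : 𝕜} (hA : ∀ i j, HasDerivAt (fun s ↦ A s i j) (A' i j) t) :
    HasDerivAt (fun s ↦ (A s).mulVecLin.toContinuousLinearMap)
      A'.mulVecLin.toContinuousLinearMap t := by
  classical
  have := Fintype.ofFinite m
  have hasDerivAt_matrix : HasDerivAt A A' t := hasDerivAt_pi.2 fun i ↦ hasDerivAt_pi.2 (hA i)
  exact (toLin' ≪≫ₗ LinearMap.toContinuousLinearMap).toContinuousLinearEquiv.hasFDerivAt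
    |>.comp_hasDerivAt t hasDerivAt_matrix

end Matrix

/-- **Lie bracket identity for gauge transforms.**
With `ĥ(t,x) := A(t)·h(A(t)⁻¹·x)` and `f*(t,x) := A'(t)·A(t)⁻¹·x + A(t)·f(A(t)⁻¹·x)`, the
Lie bracket with respect to `x` (`t` a parameter) satisfies
`[ĥ, f*]_x(t,x) = D_x f*(t,x)·ĥ(t,x) − D_x ĥ(t,x)·f*(t,x)
  = D_t ĥ(t,x) + A(t)·[h,f](A(t)⁻¹·x)`,
where `[h,f](x) = Df(x)·h(x) − Dh(x)·f(x)`.  In particular, if `[h,f] = 0` identically then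
`[ĥ, f*]_x(t,x) = D_t ĥ(t,x)`. -/
theorem gauge_transform_lie_bracket {n : ℕ}
    (h f : (Fin n → ℝ) → (Fin n → ℝ))
    (h' f' : (Fin n → ℝ) → ((Fin n → ℝ) →L[ℝ] (Fin n → ℝ)))
    (hh : ∀ x, HasFDerivAt h (h' x) x)
    (hf : ∀ x, HasFDerivAt f (f' x) x)
    (A A' : ℝ → Matrix (Fin n) (Fin n) ℝ)
    (hA : ∀ t, ∀ i j, HasDerivAt (fun s => A s i j) (A' t i j) t)
    (hAinv : ∀ t, IsUnit (A t))
    -- `ĥ` and `f*`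
    (hhat : ℝ → (Fin n → ℝ) → (Fin n → ℝ))
    (hhat_def : ∀ t x, hhat t x = (A t).mulVec (h ((A t)⁻¹.mulVec x)))
    (fstar : ℝ → (Fin n → ℝ) → (Fin n → ℝ))
    (fstar_def : ∀ t x, fstar t x =
      (A' t).mulVec ((A t)⁻¹.mulVec x) + (A t).mulVec (f ((A t)⁻¹.mulVec x)))
    -- partial derivatives of `ĥ` and `f*`
    (Dx_hhat : ℝ → (Fin n → ℝ) → ((Fin n → ℝ) →L[ℝ] (Fin n → ℝ)))
    (hDx_hhat : ∀ t x, HasFDerivAt (fun y => hhat t y) (Dx_hhat t x) x)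
    (Dt_hhat : ℝ → (Fin n → ℝ) → (Fin n → ℝ))
    (hDt_hhat : ∀ t x, HasDerivAt (fun s => hhat s x) (Dt_hhat t x) t)
    (Dx_fstar : ℝ → (Fin n → ℝ) → ((Fin n → ℝ) →L[ℝ] (Fin n → ℝ)))
    (hDx_fstar : ∀ t x, HasFDerivAt (fun y => fstar t y) (Dx_fstar t x) x) :
    (∀ (t : ℝ) (x : Fin n → ℝ),
      Dx_fstar t x (hhat t x) - Dx_hhat t x (fstar t x) =
        Dt_hhat t x +
          (A t).mulVec
            (f' ((A t)⁻¹.mulVec x) (h ((A t)⁻¹.mulVec x)) -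
              h' ((A t)⁻¹.mulVec x) (f ((A t)⁻¹.mulVec x)))) ∧
    ((∀ y, f' y (h y) - h' y (f y) = 0) →
      ∀ (t : ℝ) (x : Fin n → ℝ),
        Dx_fstar t x (hhat t x) - Dx_hhat t x (fstar t x) = Dt_hhat t x) := by
  obtain rfl : hhat = fun t ↦ linearPushforward (mulVecEquiv (A t) (hAinv t)) h :=
    funext₂ hhat_def
  obtain rfl : fstar = fun t ↦ gaugeTransform (mulVecEquiv (A t) (hAinv t))
      (A' t).mulVecLin.toContinuousLinearMap f := funext₂ fstar_def
  have bracket (t : ℝ) (x : Fin n → ℝ) := gauge_transform_lie_bracket_general (y := x)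
    (A := fun s ↦ mulVecEquiv (A s) (hAinv s)) (hasDerivAt_mulVecLin_toContinuousLinearMap (hA t))
    (hh _).differentiableAt (hf _).differentiableAt
  simp only [lieBracket, (hDx_hhat _ _).fderiv, (hDx_fstar _ _).fderiv, (hDt_hhat _ _).deriv,
    (hh _).fderiv, (hf _).fderiv] at bracket
  exact ⟨bracket, fun commute t x ↦ (bracket t x).trans (by rw [commute, map_zero, add_zero])⟩
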